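/- Let n ≥ 2, α_n = 1/2 − 1/(2n), ψ ∈ L²(Ω, z dμ) supported in ℝⁿ × (0,1], and define μ ∈ 𝒮'(ℝⁿ) by μ̂(ξ) = |ξ|^{1/(n−1)} λ̂(ξ) where λ̂(ξ) = |ξ|² ∫_0^∞ s ψ̂(ξ,s) u₁(s|ξ|^{1/α_n}) ds and u₁(z) = (1/α_n) K_0(z^{α_n}/α_n). Then μ ∈ L²(ℝⁿ), with ‖μ‖_{L²} ≤ C ‖ψ‖_{L²(Ω, z dμ)}. Consequently λ ∈ H^{1/(n−1)}(ℝⁿ). -/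

import Mathlib

open MeasureTheory
open scoped FourierTransform

/-- The modified Bessel function of the second kind of order `0`. -/
noncomputable def besselK0 (x : ℝ) : ℝ :=
  ∫ t in Set.Ioi (0 : ℝ), Real.exp (-x * Real.cosh t)

/-- `α_n = 1/2 − 1/(2n)`. -/
noncomputable def alphaN (n : ℕ) : ℝ := 1 / 2 - 1 / (2 * n)

/-- `u₁(z) = (1/α_n) K₀(z^{α_n}/α_n)`. -/
noncomputable def taubU1 (n : ℕ) (z : ℝ) : ℝ :=
  (1 / alphaN n) * besselK0 (z ^ alphaN n / alphaN n)

/-!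
Cauchy–Schwarz in `s`, against the measure `s ds` on `(0, R]` that carries `ψ̂(ξ, ·)`, bounds
`|μ̂(ξ)|²` by `∫ s |ψ̂(ξ, s)|² ds` times the squared norm of the kernel
`|ξ|^(2+β) u(s |ξ|^(1/α))`. Since `u(z) ≤ A z^(-q)` for every `q > 0`, the choice `q = α (2+β)`
makes the powers of `|ξ|` cancel and bounds the kernel by `A s^(-q)`; as `q < 1`, this is square
integrable for `s ds` on `(0, R]`. The claim follows by integrating in `ξ`, using Tonelli and then
Plancherel on each slice.

Only `‖ψ‖` is assumed measurable, so `ψ̂(ξ, s)` need not be measurable in `s`. It is continuous in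
`ξ`, however, so the frequencies `ξ` at which it is measurable form a closed set, on which Tonelli
holds. At every other `ξ` the integral defining `λ̂(ξ)` is not a Bochner integral and has the junk
value `0`. Likewise `ψ̂(·, s)` is `0` wherever `ψ(·, s)` is not integrable.
-/

open Set Filter Topology
open scoped ENNReal NNReal ContDiff

section CauchySchwarz

variable {Y : Type*} [MeasurableSpace Y] {ν : Measure Y}

theorem sq_lintegral_mul_le {f g : Y → ℝ≥0∞} (hf : AEMeasurable f ν) (hg : AEMeasurable g ν) :
    (∫⁻ y, f y * g y ∂ν) ^ 2 ≤ (∫⁻ y, f y ^ 2 ∂ν) * ∫⁻ y, g y ^ 2 ∂ν := by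
  have holder := pow_le_pow_left' (ENNReal.lintegral_mul_le_Lp_mul_Lq ν .two_two hf hg) 2
  rw [mul_pow, ← ENNReal.rpow_mul_natCast, ← ENNReal.rpow_mul_natCast] at holder
  simpa using holder

theorem sq_enorm_integral_mul_le {𝕜 : Type*} [RCLike 𝕜] {f g : Y → 𝕜} (hf : AEMeasurable f ν)
    (hg : AEMeasurable g ν) :
    ‖∫ y, f y * g y ∂ν‖ₑ ^ 2 ≤ (∫⁻ y, ‖f y‖ₑ ^ 2 ∂ν) * ∫⁻ y, ‖g y‖ₑ ^ 2 ∂ν :=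
  calc ‖∫ y, f y * g y ∂ν‖ₑ ^ 2
      ≤ (∫⁻ y, ‖f y‖ₑ * ‖g y‖ₑ ∂ν) ^ 2 := by
        gcongr
        simpa only [enorm_mul] using enorm_integral_le_lintegral_enorm (fun y => f y * g y)
    _ ≤ (∫⁻ y, ‖f y‖ₑ ^ 2 ∂ν) * ∫⁻ y, ‖g y‖ₑ ^ 2 ∂ν := sq_lintegral_mul_le hf.enorm hg.enorm

theorem integral_mul_eq_zero_of_not_aemeasurable {𝕜 : Type*} [RCLike 𝕜] {f g : Y → 𝕜}
    (hg : AEMeasurable g ν) (hg0 : ∀ᵐ y ∂ν, g y ≠ 0) (hf : ¬ AEMeasurable f ν) :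
    ∫ y, f y * g y ∂ν = 0 := by
  refine integral_undef fun hfg => hf ?_
  refine (hfg.1.aemeasurable.div hg).congr ?_
  filter_upwards [hg0] with y hy
  exact mul_div_cancel_right₀ (f y) hy

end CauchySchwarz

section SeparatelyMeasurable

theorem isClosed_setOf_aemeasurable {X Y Z : Type*} [TopologicalSpace X] [SequentialSpace X]
    [MeasurableSpace Y] {ν : Measure Y} [TopologicalSpace Z]
    [TopologicalSpace.PseudoMetrizableSpace Z] [MeasurableSpace Z] [BorelSpace Z]
    {u : X → Y → Z} (hcont : ∀ y, Continuous fun x => u x y) :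
    IsClosed {x | AEMeasurable (u x) ν} := by
  refine IsSeqClosed.isClosed fun x a hx hxa => ?_
  exact aemeasurable_of_tendsto_metrizable_ae atTop hx
    (Eventually.of_forall fun y => ((hcont y).tendsto a).comp hxa)

variable {X Y : Type*} [TopologicalSpace X] [TopologicalSpace.MetrizableSpace X]
  [SecondCountableTopology X] [MeasurableSpace X] [OpensMeasurableSpace X] [MeasurableSpace Y]
  {μ : Measure X} {ν : Measure Y}

theorem exists_measurable_uncurry_ae_forall_eq {Z : Type*} [TopologicalSpace Z]
    [TopologicalSpace.PseudoMetrizableSpace Z] [MeasurableSpace Z] [BorelSpace Z] [Nonempty Z]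
    {u : X → Y → Z} (hcont : ∀ y, Continuous fun x => u x y) (hmeas : ∀ x, AEMeasurable (u x) ν) :
    ∃ v : X → Y → Z, Measurable (Function.uncurry v) ∧ ∀ᵐ y ∂ν, ∀ x, u x y = v x y := by
  classical
  obtain ⟨D, hDcount, hDdense⟩ := TopologicalSpace.exists_countable_dense X
  have : Countable D := hDcount.to_subtype
  have hmk : ∀ᵐ y ∂ν, ∀ d : D, u d y = (hmeas d).mk _ y :=
    ae_all_iff.2 fun d => (hmeas d).ae_eq_mk
  obtain ⟨N, hsub, hN, hN0⟩ := exists_measurable_superset_of_null (ae_iff.1 hmk)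
  have hmk_of_notMem {y : Y} (hy : y ∉ N) (d : D) : u d y = (hmeas d).mk _ y :=
    not_not.1 (mt (@hsub y) hy) d
  obtain ⟨z⟩ := ‹Nonempty Z›
  let v : X → Y → Z := fun x => N.piecewise (fun _ => z) (u x)
  have hvcont (y : Y) : Continuous fun x => v x y := by
    by_cases hy : y ∈ N
    · simpa only [v, piecewise_eq_of_mem _ _ _ hy] using continuous_const
    · simpa only [v, piecewise_eq_of_notMem _ _ _ hy] using hcont y
  have hvD (d : D) : Measurable (v d) := by
    have hvd : v d = N.piecewise (fun _ => z) ((hmeas d).mk _) := by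
      ext y
      by_cases hy : y ∈ N
      · simp only [v, piecewise_eq_of_mem _ _ _ hy]
      · simpa only [v, piecewise_eq_of_notMem _ _ _ hy] using hmk_of_notMem hy d
    exact hvd ▸ measurable_const.piecewise hN (hmeas d).measurable_mk
  have hv (x : X) : Measurable (v x) := by
    obtain ⟨d, hdD, hdx⟩ := mem_closure_iff_seq_limit.1 (hDdense x)
    exact measurable_of_tendsto_metrizable (fun k => hvD ⟨d k, hdD k⟩)
      (tendsto_pi_nhds.2 fun y => ((hvcont y).tendsto x).comp hdx)
  refine ⟨v, measurable_uncurry_of_continuous_of_measurable hvcont hv, ?_⟩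
  filter_upwards [measure_eq_zero_iff_ae_notMem.1 hN0] with y hy x
  exact (piecewise_eq_of_notMem N _ _ hy).symm

theorem lintegral_lintegral_swap_of_continuous_left [SFinite μ] [SFinite ν] {f : X → Y → ℝ≥0∞}
    (hcont : ∀ y, Continuous fun x => f x y) (hmeas : ∀ x, AEMeasurable (f x) ν) :
    ∫⁻ x, ∫⁻ y, f x y ∂ν ∂μ = ∫⁻ y, ∫⁻ x, f x y ∂μ ∂ν := by
  obtain ⟨v, hv, hfv⟩ := exists_measurable_uncurry_ae_forall_eq hcont hmeas
  calc ∫⁻ x, ∫⁻ y, f x y ∂ν ∂μ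
      = ∫⁻ x, ∫⁻ y, v x y ∂ν ∂μ :=
        lintegral_congr fun x => lintegral_congr_ae (hfv.mono fun y hy => hy x)
    _ = ∫⁻ y, ∫⁻ x, v x y ∂μ ∂ν := lintegral_lintegral_swap hv.aemeasurable
    _ = ∫⁻ y, ∫⁻ x, f x y ∂μ ∂ν :=
        lintegral_congr_ae (hfv.mono fun y hy => lintegral_congr fun x => (hy x).symm)

theorem setLIntegral_lintegral_le_of_continuous_left [SigmaFinite μ] [SFinite ν]
    {f : X → Y → ℝ≥0∞} (hcont : ∀ y, Continuous fun x => f x y) :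
    ∫⁻ x in {x | AEMeasurable (f x) ν}, ∫⁻ y, f x y ∂ν ∂μ ≤ ∫⁻ y, ∫⁻ x, f x y ∂μ ∂ν := by
  set S := {x | AEMeasurable (f x) ν}
  have hS : MeasurableSet S := (isClosed_setOf_aemeasurable hcont).measurableSet
  have : SigmaFinite (μ.comap ((↑) : S → X)) := by
    refine SigmaFinite.of_map _ measurable_subtype_coe.aemeasurable ?_
    rw [map_comap_subtype_coe hS]
    infer_instance
  calc ∫⁻ x in S, ∫⁻ y, f x y ∂ν ∂μ
      = ∫⁻ x : S, ∫⁻ y, f x y ∂ν ∂(μ.comap (↑)) :=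
        (lintegral_subtype_comap hS fun x => ∫⁻ y, f x y ∂ν).symm
    _ = ∫⁻ y, ∫⁻ x : S, f x y ∂(μ.comap (↑)) ∂ν :=
        lintegral_lintegral_swap_of_continuous_left
          (fun y => (hcont y).comp continuous_subtype_val) Subtype.prop
    _ = ∫⁻ y, ∫⁻ x in S, f x y ∂μ ∂ν :=
        lintegral_congr fun y => lintegral_subtype_comap hS fun x => f x y
    _ ≤ ∫⁻ y, ∫⁻ x, f x y ∂μ ∂ν := lintegral_mono fun y => setLIntegral_le_lintegral S _

end SeparatelyMeasurable

section Fourier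

variable {V : Type*} [NormedAddCommGroup V] [InnerProductSpace ℝ V] [FiniteDimensional ℝ V]
  [MeasurableSpace V] [BorelSpace V]

section Plancherel

variable {F : Type*} [NormedAddCommGroup F]

section NormedSpace

variable [NormedSpace ℂ F]

theorem fourier_eq_zero_of_not_integrable {f : V → F} (hf : ¬ Integrable f) : 𝓕 f = 0 := by
  ext ξ
  rw [Real.fourier_eq]
  exact integral_undef fun h => hf ((Real.fourierIntegral_convergent_iff ξ).1 h)

theorem continuous_fourier_of_forall (f : V → F) : Continuous (𝓕 f) := by
  by_cases hf : Integrable f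
  · exact VectorFourier.fourierIntegral_continuous Real.continuous_fourierChar
      (by exact continuous_inner) hf
  · exact fourier_eq_zero_of_not_integrable hf ▸ continuous_zero

end NormedSpace

variable [InnerProductSpace ℂ F] [CompleteSpace F]

theorem coeFn_fourier_toLp {f : V → F} (hf : Integrable f) (hf2 : MemLp f 2 volume) :
    (𝓕 (hf2.toLp f) : Lp (α := V) F 2 volume) =ᵐ[volume] 𝓕 f := by
  refine ae_eq_of_integral_contDiff_smul_eq
    ((Lp.memLp _).locallyIntegrable (by norm_num))
    (continuous_fourier_of_forall f).locallyIntegrable fun g hg hgc => ?_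
  have hGc : HasCompactSupport (Complex.ofRealCLM ∘ g) := hgc.comp_left rfl
  have hG : ContDiff ℝ ∞ (Complex.ofRealCLM ∘ g) := by fun_prop
  set G : SchwartzMap V ℂ := hGc.toSchwartzMap hG with hGdef
  have hGg (x : V) : G x = (g x : ℂ) := by simp [hGdef]
  have hdistr : ∫ x, G x • (𝓕 (hf2.toLp f) : Lp (α := V) F 2 volume) x
      = ∫ x, (𝓕 G) x • hf2.toLp f x := by
    simpa only [TemperedDistribution.fourier_apply, Lp.toTemperedDistribution_apply] using
      (congrArg (fun T => T G) (Lp.fourier_toTemperedDistribution_eq (hf2.toLp f))).symm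
  have hself : ∫ x, (𝓕 G) x • f x = ∫ x, G x • 𝓕 f x := by
    rw [SchwartzMap.fourier_coe]
    simpa using! VectorFourier.integral_bilin_fourierIntegral_eq_flip
      (ContinuousLinearMap.lsmul ℂ ℂ) (L := innerₗ V)
      Real.continuous_fourierChar continuous_inner G.integrable hf
  have hcoe : ∫ x, (𝓕 G) x • hf2.toLp f x = ∫ x, (𝓕 G) x • f x :=
    integral_congr_ae (hf2.coeFn_toLp.mono fun x hx => congrArg ((𝓕 G) x • ·) hx)
  simpa only [hGg, Complex.coe_smul] using hdistr.trans (hcoe.trans hself)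

theorem eLpNorm_two_fourier {f : V → F} (hf : Integrable f) (hf2 : MemLp f 2 volume) :
    eLpNorm (𝓕 f) 2 volume = eLpNorm f 2 volume := by
  rw [← eLpNorm_congr_ae (coeFn_fourier_toLp hf hf2), ← eLpNorm_congr_ae hf2.coeFn_toLp,
    ← ENNReal.toReal_eq_toReal_iff' (Lp.eLpNorm_ne_top _) (Lp.eLpNorm_ne_top _),
    ← Lp.norm_def, ← Lp.norm_def]
  exact Lp.norm_fourier_eq (hf2.toLp f)

theorem lintegral_sq_enorm_fourier_le (f : V → F) :
    ∫⁻ ξ, ‖𝓕 f ξ‖ₑ ^ 2 ≤ ∫⁻ x, ‖f x‖ₑ ^ 2 := by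
  by_cases hf : Integrable f
  swap
  · simp [fourier_eq_zero_of_not_integrable hf]
  have hsq (g : V → F) : ∫⁻ x, ‖g x‖ₑ ^ 2 = eLpNorm g 2 volume ^ 2 := by
    simpa using (eLpNorm_nnreal_pow_eq_lintegral (f := g) (μ := volume) two_ne_zero).symm
  rw [hsq, hsq]
  by_cases hf2 : eLpNorm f 2 volume = ⊤
  · simp [hf2]
  · rw [eLpNorm_two_fourier hf ⟨hf.1, lt_top_iff_ne_top.2 hf2⟩]

end Plancherel

theorem lintegral_sq_enorm_integral_fourier_mul_le {Y : Type*} [MeasurableSpace Y] {ν : Measure Y}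
    [SFinite ν] {k : V → Y → ℂ} (hk : ∀ ξ, AEMeasurable (k ξ) ν)
    (hk0 : ∀ ξ, k ξ = 0 ∨ ∀ᵐ y ∂ν, k ξ y ≠ 0) {K : ℝ≥0}
    (hK : ∀ ξ, ∫⁻ y, ‖k ξ y‖ₑ ^ 2 ∂ν ≤ K) (f : Y → V → ℂ) :
    ∫⁻ ξ, ‖∫ y, 𝓕 (f y) ξ * k ξ y ∂ν‖ₑ ^ 2 ≤ K * ∫⁻ y, (∫⁻ x, ‖f y x‖ₑ ^ 2) ∂ν := by
  let G : V → Y → ℝ≥0∞ := fun ξ y => ‖𝓕 (f y) ξ‖ₑ ^ 2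
  let S : Set V := {ξ | AEMeasurable (G ξ) ν}
  have hGcont (y : Y) : Continuous fun ξ => G ξ y :=
    (ENNReal.continuous_pow 2).comp (continuous_fourier_of_forall (f y)).enorm
  have hpoint (ξ : V) : ‖∫ y, 𝓕 (f y) ξ * k ξ y ∂ν‖ₑ ^ 2
      ≤ S.indicator (fun ξ => K * ∫⁻ y, G ξ y ∂ν) ξ := by
    by_cases hmeas : AEMeasurable (fun y => 𝓕 (f y) ξ) ν
    · rw [indicator_of_mem (show ξ ∈ S from hmeas.enorm.pow_const 2), mul_comm]
      exact (sq_enorm_integral_mul_le hmeas (hk ξ)).trans (mul_le_mul_right (hK ξ) _)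
    · rcases hk0 ξ with hzero | hne
      · simp [hzero]
      · simp [integral_mul_eq_zero_of_not_aemeasurable (hk ξ) hne hmeas]
  calc ∫⁻ ξ, ‖∫ y, 𝓕 (f y) ξ * k ξ y ∂ν‖ₑ ^ 2
      ≤ ∫⁻ ξ, S.indicator (fun ξ => K * ∫⁻ y, G ξ y ∂ν) ξ := lintegral_mono hpoint
    _ = K * ∫⁻ ξ in S, ∫⁻ y, G ξ y ∂ν := by
        rw [lintegral_indicator (isClosed_setOf_aemeasurable hGcont).measurableSet,
          lintegral_const_mul' _ _ ENNReal.coe_ne_top]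
    _ ≤ K * ∫⁻ y, (∫⁻ ξ, G ξ y) ∂ν := by
        gcongr
        exact setLIntegral_lintegral_le_of_continuous_left hGcont
    _ ≤ K * ∫⁻ y, (∫⁻ x, ‖f y x‖ₑ ^ 2) ∂ν := by
        gcongr K * ?_
        exact lintegral_mono fun y => lintegral_sq_enorm_fourier_le (f y)

end Fourier

section WeightMeasure

/-- The measure `s ds` on `(0, R]`: the vertical factor of the weighted measure `z dμ` on `Ω`,
restricted to the heights that meet the support of `ψ`. -/
noncomputable def weightMeasure (R : ℝ) : Measure ℝ :=
  (volume.restrict (Ioc 0 R)).withDensity ENNReal.ofReal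

variable {R : ℝ}

instance : SFinite (weightMeasure R) := by
  unfold weightMeasure
  infer_instance

theorem lintegral_weightMeasure (f : ℝ → ℝ≥0∞) :
    ∫⁻ s, f s ∂weightMeasure R = ∫⁻ s in Ioc 0 R, ENNReal.ofReal s * f s :=
  lintegral_withDensity_eq_lintegral_mul_non_measurable _ ENNReal.measurable_ofReal
    (Eventually.of_forall fun _ => ENNReal.ofReal_lt_top) f

theorem integral_weightMeasure {E : Type*} [NormedAddCommGroup E] [NormedSpace ℝ E] (f : ℝ → E) :
    ∫ s, f s ∂weightMeasure R = ∫ s in Ioc 0 R, s • f s := by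
  rw [weightMeasure, integral_withDensity_eq_integral_toReal_smul ENNReal.measurable_ofReal
    (Eventually.of_forall fun _ => ENNReal.ofReal_lt_top)]
  exact setIntegral_congr_fun measurableSet_Ioc fun s hs => by
    simp only [ENNReal.toReal_ofReal hs.1.le]

theorem ae_weightMeasure_pos : ∀ᵐ s ∂weightMeasure R, 0 < s :=
  (withDensity_absolutelyContinuous _ _).ae_le
    ((ae_restrict_mem measurableSet_Ioc).mono fun _ hs => hs.1)

theorem exists_lintegral_weightMeasure_sq_le (A : ℝ) {q : ℝ} (hq : q < 1) :
    ∃ K : ℝ≥0, ∀ f : ℝ → ℝ, (∀ s, 0 < s → |f s| ≤ A * s ^ (-q)) →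
      ∫⁻ s, ‖f s‖ₑ ^ 2 ∂weightMeasure R ≤ K := by
  have hint : IntegrableOn (fun s : ℝ => A ^ 2 * s ^ (1 - 2 * q)) (Ioc 0 R) :=
    (intervalIntegral.intervalIntegrable_rpow' (by linarith)).1.const_mul _
  refine ⟨(∫⁻ s in Ioc 0 R, ENNReal.ofReal (A ^ 2 * s ^ (1 - 2 * q))).toNNReal, fun f hf => ?_⟩
  rw [ENNReal.coe_toNNReal hint.lintegral_lt_top.ne, lintegral_weightMeasure]
  refine setLIntegral_mono' measurableSet_Ioc fun s hs => ?_
  have hsq : s * |f s| ^ 2 ≤ A ^ 2 * s ^ (1 - 2 * q) :=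
    calc s * |f s| ^ 2 ≤ s * (A * s ^ (-q)) ^ 2 := by
          have := hf s hs.1
          have := hs.1.le
          gcongr
      _ = A ^ 2 * (s ^ (1 : ℝ) * s ^ (-q) * s ^ (-q)) := by rw [Real.rpow_one]; ring
      _ = A ^ 2 * s ^ (1 - 2 * q) := by
          rw [← Real.rpow_add hs.1, ← Real.rpow_add hs.1]
          ring_nf
  rw [Real.enorm_eq_ofReal_abs, ← ENNReal.ofReal_pow (abs_nonneg _), ← ENNReal.ofReal_mul hs.1.le]
  exact ENNReal.ofReal_le_ofReal hsq

theorem lintegral_weightMeasure_sq_enorm_le {X E : Type*} [MeasureSpace X]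
    [SFinite (volume : Measure X)] [NormedAddCommGroup E] {ψ : X × ℝ → E}
    (hψ : IntegrableOn (fun p => ‖ψ p‖ ^ 2 * p.2) {p | 0 < p.2}) :
    ∫⁻ s, (∫⁻ x, ‖ψ (x, s)‖ₑ ^ 2) ∂weightMeasure R
      ≤ ENNReal.ofReal (∫ p in {p : X × ℝ | 0 < p.2}, ‖ψ p‖ ^ 2 * p.2) := by
  have hset : {p : X × ℝ | 0 < p.2} = univ ×ˢ Ioi 0 := by
    ext p
    simp
  have hprod : (volume : Measure (X × ℝ)).restrict {p | 0 < p.2}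
      = (volume : Measure X).prod (volume.restrict (Ioi 0)) := by
    rw [hset, Measure.volume_eq_prod, ← Measure.prod_restrict, Measure.restrict_univ]
  have hnonneg : 0 ≤ᵐ[volume.restrict {p : X × ℝ | 0 < p.2}] fun p => ‖ψ p‖ ^ 2 * p.2 := by
    filter_upwards [ae_restrict_mem (measurableSet_lt measurable_const measurable_snd)] with p hp
    exact mul_nonneg (sq_nonneg _) (le_of_lt hp)
  have hslice (s : ℝ) : ENNReal.ofReal s * ∫⁻ x, ‖ψ (x, s)‖ₑ ^ 2
      = ∫⁻ x, ENNReal.ofReal (‖ψ (x, s)‖ ^ 2 * s) := by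
    rw [← lintegral_const_mul' _ _ ENNReal.ofReal_ne_top]
    refine lintegral_congr fun x => ?_
    rw [ENNReal.ofReal_mul (sq_nonneg _), ENNReal.ofReal_pow (norm_nonneg _), ofReal_norm, mul_comm]
  rw [ofReal_integral_eq_lintegral_ofReal hψ hnonneg, hprod,
    lintegral_prod_symm _ (hprod ▸ hψ.1.aemeasurable.ennreal_ofReal), lintegral_weightMeasure]
  calc ∫⁻ s in Ioc 0 R, ENNReal.ofReal s * ∫⁻ x, ‖ψ (x, s)‖ₑ ^ 2
      ≤ ∫⁻ s in Ioi 0, ENNReal.ofReal s * ∫⁻ x, ‖ψ (x, s)‖ₑ ^ 2 :=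
        lintegral_mono_set Ioc_subset_Ioi_self
    _ = ∫⁻ s in Ioi 0, ∫⁻ x, ENNReal.ofReal (‖ψ (x, s)‖ ^ 2 * s) :=
        setLIntegral_congr_fun measurableSet_Ioi fun s _ => hslice s

end WeightMeasure

section Bessel

theorem exp_neg_le_rpow {p y : ℝ} (hp : 0 < p) (hy : 0 < y) :
    Real.exp (-y) ≤ p ^ p * y ^ (-p) := by
  have hexp : (y / p) ^ p ≤ Real.exp y :=
    calc (y / p) ^ p ≤ Real.exp (y / p) ^ p := by
          gcongr
          linarith [Real.add_one_le_exp (y / p)]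
      _ = Real.exp y := by rw [← Real.exp_mul, div_mul_cancel₀ _ hp.ne']
  calc Real.exp (-y) ≤ ((y / p) ^ p)⁻¹ := by
        rw [Real.exp_neg]
        gcongr
    _ = p ^ p * y ^ (-p) := by
        rw [Real.div_rpow hy.le hp.le, inv_div, Real.rpow_neg hy.le, div_eq_mul_inv]

theorem exp_neg_mul_cosh_le {p x : ℝ} (hp : 0 < p) (hx : 0 < x) (t : ℝ) :
    Real.exp (-x * Real.cosh t) ≤ (2 * p) ^ p * x ^ (-p) * Real.exp (-p * t) := by
  have hcosh : Real.exp t / 2 ≤ Real.cosh t := by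
    rw [Real.cosh_eq]
    linarith [Real.exp_pos (-t)]
  calc Real.exp (-x * Real.cosh t)
      ≤ Real.exp (-(x * (Real.exp t / 2))) := by
        rw [neg_mul]
        gcongr
    _ ≤ p ^ p * (x * (Real.exp t / 2)) ^ (-p) := exp_neg_le_rpow hp (by positivity)
    _ = (2 * p) ^ p * x ^ (-p) * Real.exp (-p * t) := by
        rw [Real.mul_rpow hx.le (by positivity), Real.div_rpow (Real.exp_pos t).le two_pos.le,
          ← Real.exp_mul, Real.mul_rpow two_pos.le hp.le, Real.rpow_neg two_pos.le, div_inv_eq_mul]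
        ring_nf

theorem integrableOn_exp_neg_mul_cosh {x : ℝ} (hx : 0 < x) :
    IntegrableOn (fun t => Real.exp (-x * Real.cosh t)) (Ioi 0) := by
  have hdom := (integrableOn_exp_mul_Ioi neg_one_lt_zero 0).const_mul
    ((2 * 1) ^ (1 : ℝ) * x ^ (-1 : ℝ))
  have hcont : Continuous fun t => Real.exp (-x * Real.cosh t) := by fun_prop
  refine hdom.mono' hcont.aestronglyMeasurable (Eventually.of_forall fun t => ?_)
  rw [Real.norm_of_nonneg (Real.exp_pos _).le]
  exact exp_neg_mul_cosh_le one_pos hx t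

theorem besselK0_pos {x : ℝ} (hx : 0 < x) : 0 < besselK0 x := by
  have : NeZero (volume.restrict (Ioi (0 : ℝ))) := ⟨by simp [Measure.restrict_eq_zero]⟩
  exact integral_exp_pos (integrableOn_exp_neg_mul_cosh hx)

theorem besselK0_le_rpow {p x : ℝ} (hp : 0 < p) (hx : 0 < x) :
    besselK0 x ≤ (2 * p) ^ p / p * x ^ (-p) :=
  calc besselK0 x
      ≤ ∫ t in Ioi 0, (2 * p) ^ p * x ^ (-p) * Real.exp (-p * t) :=
        setIntegral_mono (integrableOn_exp_neg_mul_cosh hx)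
          ((integrableOn_exp_mul_Ioi (neg_neg_of_pos hp) 0).const_mul _) (exp_neg_mul_cosh_le hp hx)
    _ = (2 * p) ^ p / p * x ^ (-p) := by
        rw [integral_const_mul, integral_exp_mul_Ioi (neg_neg_of_pos hp), mul_zero, Real.exp_zero]
        field_simp

theorem measurable_besselK0 : Measurable besselK0 := by
  have : Continuous (Function.uncurry fun x t : ℝ => Real.exp (-x * Real.cosh t)) := by
    unfold Function.uncurry
    fun_prop
  exact this.stronglyMeasurable.integral_prod_right.measurable

/-- The profile `u(z) = α⁻¹ K₀(z^α / α)` with an arbitrary real exponent `α`; the profile `u₁` is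
the case `α = α_n`. -/
noncomputable def besselProfile (α z : ℝ) : ℝ :=
  (1 / α) * besselK0 (z ^ α / α)

/-- The kernel `r^β r² u(s r^(1/α))`, which at `r = |ξ|` is the factor multiplying `s ψ̂(ξ, s)` in
the integral that defines `μ̂(ξ) = |ξ|^β λ̂(ξ)`. -/
noncomputable def besselKernel (α β r s : ℝ) : ℝ :=
  r ^ β * r ^ 2 * besselProfile α (s * r ^ (1 / α))

variable {α β r s : ℝ}

theorem besselProfile_pos (hα : 0 < α) {z : ℝ} (hz : 0 < z) : 0 < besselProfile α z :=
  mul_pos (by positivity) (besselK0_pos (by positivity))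

theorem exists_besselProfile_le_rpow (hα : 0 < α) {q : ℝ} (hq : 0 < q) :
    ∃ A, ∀ z, 0 < z → besselProfile α z ≤ A * z ^ (-q) := by
  refine ⟨1 / α * ((2 * (q / α)) ^ (q / α) / (q / α) * α ^ (q / α)), fun z hz => ?_⟩
  have hexponent : (z ^ α / α) ^ (-(q / α)) = α ^ (q / α) * z ^ (-q) := by
    rw [Real.div_rpow (by positivity) hα.le, ← Real.rpow_mul hz.le, mul_neg,
      mul_div_cancel₀ q hα.ne', Real.rpow_neg hα.le, div_inv_eq_mul, mul_comm]
  calc besselProfile α z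
      ≤ 1 / α * ((2 * (q / α)) ^ (q / α) / (q / α) * (z ^ α / α) ^ (-(q / α))) := by
        unfold besselProfile
        gcongr
        exact besselK0_le_rpow (by positivity) (by positivity)
    _ = 1 / α * ((2 * (q / α)) ^ (q / α) / (q / α) * α ^ (q / α)) * z ^ (-q) := by
        rw [hexponent]
        ring

theorem measurable_besselKernel : Measurable (besselKernel α β r) := by
  unfold besselKernel besselProfile
  exact ((measurable_besselK0.comp (by fun_prop)).const_mul _).const_mul _

theorem besselKernel_zero : besselKernel α β 0 = 0 := by
  ext s
  simp [besselKernel]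

theorem besselKernel_pos (hα : 0 < α) (hr : 0 < r) (hs : 0 < s) : 0 < besselKernel α β r s :=
  mul_pos (by positivity) (besselProfile_pos hα (by positivity))

theorem exists_abs_besselKernel_le_rpow (hα : 0 < α) (hβ : 0 < 2 + β) :
    ∃ A, ∀ r, 0 ≤ r → ∀ s, 0 < s → |besselKernel α β r s| ≤ A * s ^ (-(α * (2 + β))) := by
  obtain ⟨A, hA⟩ := exists_besselProfile_le_rpow hα (mul_pos hα hβ)
  have hA0 : 0 ≤ A := by
    simpa using (besselProfile_pos hα one_pos).le.trans (hA 1 one_pos)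
  refine ⟨A, fun r hr s hs => ?_⟩
  rcases hr.eq_or_lt with rfl | hr
  · rw [besselKernel_zero, Pi.zero_apply, abs_zero]
    positivity
  have hexponent : (s * r ^ (1 / α)) ^ (-(α * (2 + β)))
      = s ^ (-(α * (2 + β))) * (r ^ β * r ^ 2)⁻¹ := by
    rw [Real.mul_rpow hs.le (by positivity), ← Real.rpow_mul hr.le, ← Real.rpow_two,
      ← Real.rpow_add hr, ← Real.rpow_neg hr.le]
    congr 2
    field_simp
    ring
  rw [abs_of_pos (besselKernel_pos hα hr hs)]
  calc besselKernel α β r s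
      ≤ r ^ β * r ^ 2 * (A * (s * r ^ (1 / α)) ^ (-(α * (2 + β)))) := by
        unfold besselKernel
        gcongr
        exact hA _ (by positivity)
    _ = A * s ^ (-(α * (2 + β))) := by
        rw [hexponent]
        field_simp

end Bessel

section Main

variable {V : Type*} [NormedAddCommGroup V] [InnerProductSpace ℝ V] [FiniteDimensional ℝ V]
  [MeasurableSpace V] [BorelSpace V]

theorem mul_setIntegral_eq_integral_besselKernel {φ : ℝ → ℂ} {R : ℝ} (hφ : ∀ s, R < s → φ s = 0)
    (α β r : ℝ) :
    ((r ^ β : ℝ) : ℂ) * (r ^ 2 : ℂ) *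
        ∫ s in Ioi (0 : ℝ), (s : ℂ) * φ s * (besselProfile α (s * r ^ (1 / α)) : ℝ)
      = ∫ s, φ s * (besselKernel α β r s : ℂ) ∂weightMeasure R := by
  have hsupp : ∫ s in Ioi (0 : ℝ), (s : ℂ) * φ s * (besselProfile α (s * r ^ (1 / α)) : ℝ)
      = ∫ s in Ioc 0 R, (s : ℂ) * φ s * (besselProfile α (s * r ^ (1 / α)) : ℝ) := by
    refine setIntegral_eq_of_subset_of_forall_sdiff_eq_zero measurableSet_Ioi Ioc_subset_Ioi_self
      fun s hs => ?_
    rw [hφ s (not_le.1 fun hsR => hs.2 ⟨hs.1, hsR⟩), mul_zero, zero_mul]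
  rw [hsupp, ← integral_const_mul, integral_weightMeasure]
  refine integral_congr_ae (Eventually.of_forall fun s => ?_)
  simp only [besselKernel, Complex.real_smul]
  push_cast
  ring

theorem exists_lintegral_sq_besselKernel_le {α β : ℝ} (hα : 0 < α) (hβ : 0 < 2 + β)
    (hαβ : α * (2 + β) < 1) (R : ℝ) :
    ∃ K : ℝ≥0, ∀ r, 0 ≤ r → ∫⁻ s, ‖besselKernel α β r s‖ₑ ^ 2 ∂weightMeasure R ≤ K := by
  obtain ⟨A, hA⟩ := exists_abs_besselKernel_le_rpow hα hβ
  obtain ⟨K, hK⟩ := exists_lintegral_weightMeasure_sq_le (R := R) A hαβ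
  exact ⟨K, fun r hr => hK _ (hA r hr)⟩

theorem besselKernel_eq_zero_or_ae_ne_zero {α r : ℝ} (hα : 0 < α) (hr : 0 ≤ r) (β R : ℝ) :
    besselKernel α β r = 0 ∨ ∀ᵐ s ∂weightMeasure R, besselKernel α β r s ≠ 0 := by
  rcases hr.eq_or_lt with rfl | hr
  · exact .inl besselKernel_zero
  · exact .inr (ae_weightMeasure_pos.mono fun s hs => (besselKernel_pos hα hr hs).ne')

theorem stmt9_general {α β : ℝ} (hα : 0 < α) (hβ : 0 < 2 + β) (hαβ : α * (2 + β) < 1) (R : ℝ) :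
    ∃ C > (0 : ℝ), ∀ ψ ψhat : V × ℝ → ℂ,
      (∀ s : ℝ, (fun ξ => ψhat (ξ, s)) = 𝓕 (fun x => ψ (x, s))) →
      (∀ (x : V) (s : ℝ), R < s → ψ (x, s) = 0) →
      IntegrableOn (fun p => ‖ψ p‖ ^ 2 * p.2) {p | 0 < p.2} →
      (∫⁻ ξ : V,
          ENNReal.ofReal
            (‖((‖ξ‖ ^ β : ℝ) : ℂ) * (‖ξ‖ ^ 2 : ℂ) * ∫ s in Ioi (0 : ℝ),
                (s : ℂ) * ψhat (ξ, s) * (besselProfile α (s * ‖ξ‖ ^ (1 / α)) : ℝ)‖ ^ 2))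
        ≤ ENNReal.ofReal (C * ∫ p in {p : V × ℝ | 0 < p.2}, ‖ψ p‖ ^ 2 * p.2) := by
  obtain ⟨K, hK⟩ := exists_lintegral_sq_besselKernel_le hα hβ hαβ R
  refine ⟨K + 1, by positivity, fun ψ ψhat hhat hsupp hψ => ?_⟩
  let k : V → ℝ → ℂ := fun ξ s => (besselKernel α β ‖ξ‖ s : ℂ)
  have hkmeas (ξ : V) : Measurable (k ξ) := Complex.measurable_ofReal.comp measurable_besselKernel
  have hknorm (ξ : V) : ∫⁻ s, ‖k ξ s‖ₑ ^ 2 ∂weightMeasure R ≤ K := by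
    simpa only [k, ← ofReal_norm, Complex.norm_real] using hK ‖ξ‖ (norm_nonneg ξ)
  have hk0 (ξ : V) : k ξ = 0 ∨ ∀ᵐ s ∂weightMeasure R, k ξ s ≠ 0 := by
    refine (besselKernel_eq_zero_or_ae_ne_zero hα (norm_nonneg ξ) β R).imp (fun h => ?_)
      fun h => h.mono fun s hs => Complex.ofReal_ne_zero.2 hs
    ext s
    simp [k, h]
  have hhat' (ξ : V) (s : ℝ) : ψhat (ξ, s) = 𝓕 (fun x => ψ (x, s)) ξ := congrFun (hhat s) ξ
  have hhat_supp (ξ : V) (s : ℝ) (hs : R < s) : ψhat (ξ, s) = 0 := by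
    simp [hhat', Real.fourier_eq, hsupp _ s hs]
  have hkernel (ξ : V) := mul_setIntegral_eq_integral_besselKernel (hhat_supp ξ) α β ‖ξ‖
  simp only [hkernel]
  simp only [hhat', ENNReal.ofReal_pow (norm_nonneg _), ofReal_norm]
  calc ∫⁻ ξ, ‖∫ s, 𝓕 (fun x => ψ (x, s)) ξ * k ξ s ∂weightMeasure R‖ₑ ^ 2
      ≤ K * ∫⁻ s, (∫⁻ x, ‖ψ (x, s)‖ₑ ^ 2) ∂weightMeasure R :=
        lintegral_sq_enorm_integral_fourier_mul_le (fun ξ => (hkmeas ξ).aemeasurable) hk0 hknorm _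
    _ ≤ ENNReal.ofReal (K + 1) *
          ENNReal.ofReal (∫ p in {p : V × ℝ | 0 < p.2}, ‖ψ p‖ ^ 2 * p.2) := by
        gcongr
        · rw [← ENNReal.ofReal_coe_nnreal]
          exact ENNReal.ofReal_le_ofReal (by linarith)
        · exact lintegral_weightMeasure_sq_enorm_le hψ
    _ = ENNReal.ofReal ((K + 1) * ∫ p in {p : V × ℝ | 0 < p.2}, ‖ψ p‖ ^ 2 * p.2) :=
        (ENNReal.ofReal_mul (by positivity)).symm

end Main

theorem alphaN_pos {n : ℕ} (hn : 2 ≤ n) : 0 < alphaN n := by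
  have hn' : (2 : ℝ) ≤ n := by exact_mod_cast hn
  have : (1 : ℝ) / (2 * n) < 1 / 2 := one_div_lt_one_div_of_lt two_pos (by linarith)
  exact sub_pos.2 this

theorem alphaN_mul_two_add_lt_one {n : ℕ} (hn : 2 ≤ n) :
    alphaN n * (2 + 1 / ((n : ℝ) - 1)) < 1 := by
  have hn' : (2 : ℝ) ≤ n := by exact_mod_cast hn
  have hne : (n : ℝ) - 1 ≠ 0 := by linarith
  have : alphaN n * (2 + 1 / ((n : ℝ) - 1)) = 1 - 1 / (2 * n) := by
    unfold alphaN
    field_simp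
    ring
  rw [this]
  exact sub_lt_self 1 (by positivity)

/-- For `ψ ∈ L²(Ω, z dμ)` supported in `ℝⁿ × (0,1]`, the function `μ` with Fourier
transform `μ̂(ξ) = |ξ|^{1/(n−1)} λ̂(ξ)`, where
`λ̂(ξ) = |ξ|² ∫₀^∞ s ψ̂(ξ,s) u₁(s |ξ|^{1/α_n}) ds`, lies in `L²(ℝⁿ)` with
`‖μ‖_{L²} ≤ C ‖ψ‖_{L²(Ω, z dμ)}`; consequently `λ ∈ H^{1/(n−1)}(ℝⁿ)`. -/
theorem stmt9 (n : ℕ) (hn : 2 ≤ n) :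
    ∃ C > (0 : ℝ), ∀ ψ ψhat : EuclideanSpace ℝ (Fin n) × ℝ → ℂ,
      (∀ s : ℝ, (fun ξ => ψhat (ξ, s)) = 𝓕 (fun x => ψ (x, s))) →
      (∀ (x : EuclideanSpace ℝ (Fin n)) (s : ℝ), s ∉ Set.Ioc (0 : ℝ) 1 → ψ (x, s) = 0) →
      IntegrableOn (fun p => ‖ψ p‖ ^ 2 * p.2) {p | 0 < p.2} →
      (∫⁻ ξ : EuclideanSpace ℝ (Fin n),
          ENNReal.ofReal
            (‖((‖ξ‖ ^ ((1 : ℝ) / (n - 1)) : ℝ) : ℂ) * (‖ξ‖ ^ 2 : ℂ) * ∫ s in Set.Ioi (0 : ℝ),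
                (s : ℂ) * ψhat (ξ, s) * (taubU1 n (s * ‖ξ‖ ^ ((1 : ℝ) / alphaN n)) : ℝ)‖ ^ 2))
        ≤ ENNReal.ofReal
            (C * ∫ p in {p : EuclideanSpace ℝ (Fin n) × ℝ | 0 < p.2}, ‖ψ p‖ ^ 2 * p.2) := by
  have hβ : 0 < 2 + 1 / ((n : ℝ) - 1) := by
    have : (2 : ℝ) ≤ n := by exact_mod_cast hn
    have : 0 < (n : ℝ) - 1 := by linarith
    positivity
  obtain ⟨C, hC, h⟩ := stmt9_general (V := EuclideanSpace ℝ (Fin n))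
    (alphaN_pos hn) hβ (alphaN_mul_two_add_lt_one hn) 1
  exact ⟨C, hC, fun ψ ψhat hhat hsupp => h ψ ψhat hhat fun x s hs =>
    hsupp x s fun hs' => hs.not_ge hs'.2⟩
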